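/- Let k be a field and A = k[X₀', X₁', X₀, …, Xₙ]. Let I ⊊ J be proper ideals of A with height I = height J, and suppose both I and J are equidimensional (every associated prime of A/I has height equal to height I, and likewise for J). Then m(J) < m(I), where m(I) := Σ over primes 𝔮 with height 𝔮 = height I of the length of the A_𝔮-module (A/I)_𝔮; in particular both m(I) and m(J) are finite natural numbers and m(J) is strictly smaller. -/

import Mathlib

open scoped Classical

noncomputable section

/-- The height (rank) of an ideal: the minimum of the heights of the primes containing it. -/
noncomputable def idealHeight {R : Type*} [CommRing R] (I : Ideal R) : ℕ∞ :=
  ⨅ (p : PrimeSpectrum R) (_ : I ≤ p.asIdeal), Order.height p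

/-- The contraction `I·A_𝔭 ∩ A` of an ideal `I` through the localization at a prime `𝔭`. -/
noncomputable def locContract {R : Type*} [CommRing R] (p : Ideal R) [p.IsPrime]
    (I : Ideal R) : Ideal R :=
  (I.map (algebraMap R (Localization.AtPrime p))).comap (algebraMap R (Localization.AtPrime p))

/-- `eq(I)`: the equidimensional part of minimal rank of `I`, i.e. the intersection of the
contractions `I·A_𝔮 ∩ A` over the minimal primes `𝔮` of `I` of minimal height. -/
noncomputable def eqPart {R : Type*} [CommRing R] (I : Ideal R) : Ideal R :=
  ⨅ (p : PrimeSpectrum R) (_ : p.asIdeal ∈ I.minimalPrimes)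
    (_ : idealHeight p.asIdeal = idealHeight I), locContract p.asIdeal I

/-- An ideal is equidimensional if all associated primes of `R ⧸ J` have height `height J`. -/
def IsEquidimensional {R : Type*} [CommRing R] (J : Ideal R) : Prop :=
  ∀ q ∈ associatedPrimes R (R ⧸ J), idealHeight q = idealHeight J

/-- The length of a module, as the longest chain of submodules. -/
noncomputable def moduleLength (R M : Type*) [Ring R] [AddCommGroup M] [Module R M] : ℕ∞ :=
  Order.height (⊤ : Submodule R M)

/-- `m(I)`: the number of primary components of minimal height of `I`, counted with their
length as multiplicity: the sum over primes `𝔮` with `height 𝔮 = height I` of the length of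
the `A_𝔮`-module `(A/I)_𝔮`. -/
noncomputable def mIdeal {R : Type*} [CommRing R] (I : Ideal R) : ℕ∞ :=
  ∑' p : PrimeSpectrum R,
    if idealHeight p.asIdeal = idealHeight I then
      moduleLength (Localization.AtPrime p.asIdeal)
        (LocalizedModule p.asIdeal.primeCompl (R ⧸ I))
    else 0

/-!
For a finite module `M` over a Noetherian ring, let `e_h(M)` (`lengthAtHeight` below) be the sum of
the lengths of `M_𝔭` over the primes `𝔭` of height `h`. Localization is exact and length is
additive, so `e_h` is additive on short exact sequences. If the annihilator of `M` has height at
least `h`, only its finitely many minimal primes contribute, each with a finite length, so `e_h(M)`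
is finite.

With `h = height I = height J`, the kernel `J/I` of `R/I → R/J` is nonzero, hence has an associated
prime. This is an associated prime of `R/I`, so it has height `h` by equidimensionality, and
`m(I) = e_h(J/I) + m(J)` with `e_h(J/I) > 0`.
-/

theorem summable_of_canonicallyOrderedAdd {ι α : Type*} [AddCommMonoid α] [CompleteLinearOrder α]
    [CanonicallyOrderedAdd α] [TopologicalSpace α] [OrderTopology α] (f : ι → α) : Summable f :=
  (hasSum_of_isLUB _ isLUB_iSup).summable

theorem tsum_enat_ne_top_of_finite_support {ι : Type*} {f : ι → ℕ∞} (hf : f.support.Finite)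
    (hne : ∀ i, f i ≠ ⊤) : ∑' i, f i ≠ ⊤ := by
  rw [tsum_eq_finsum hf]
  exact finsum_induction (· ≠ ⊤) ENat.zero_ne_top
    (fun _ _ ha hb => WithTop.add_ne_top.mpr ⟨ha, hb⟩) hne

section LocalLength

variable {R : Type*} [CommRing R] {M N P : Type*} [AddCommGroup M] [Module R M]
  [AddCommGroup N] [Module R N] [AddCommGroup P] [Module R P]

theorem map_annihilator_le_annihilator_localizedModule (S : Submonoid R) :
    (Module.annihilator R M).map (algebraMap R (Localization S)) ≤
      Module.annihilator (Localization S) (LocalizedModule S M) := by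
  refine Ideal.map_le_iff_le_comap.mpr fun r hr => Module.mem_annihilator.mpr fun x => ?_
  induction x using LocalizedModule.induction_on with
  | h m s =>
    rw [algebraMap_smul, LocalizedModule.smul'_mk, Module.mem_annihilator.mp hr m,
      LocalizedModule.zero_mk]

theorem length_ne_top_of_isArtinianRing_quotient [Module.Finite R M] {I : Ideal R}
    [IsArtinianRing (R ⧸ I)] (hI : I ≤ Module.annihilator R M) : Module.length R M ≠ ⊤ := by
  have htors : Module.IsTorsionBySet R M I :=
    (Module.isTorsionBySet_iff_subset_annihilator R M).mpr hI
  let : Module (R ⧸ I) M := htors.module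
  have : Module.Finite (R ⧸ I) M := .of_restrictScalars_finite R _ _
  rw [Module.length_eq_of_surjective (R := R ⧸ I) Ideal.Quotient.mk_surjective]
  exact Module.length_ne_top

theorem isArtinianRing_localization_quotient_map [IsNoetherianRing R] {I p : Ideal R} [p.IsPrime]
    (hp : p ∈ I.minimalPrimes) :
    IsArtinianRing (Localization.AtPrime p ⧸ I.map (algebraMap R (Localization.AtPrime p))) := by
  apply IsLocalRing.quotient_artinian_of_mem_minimalPrimes_of_isLocalRing
  rw [IsLocalization.minimalPrimes_map p.primeCompl, Set.mem_preimage]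
  simpa only [Localization.AtPrime.under_maximalIdeal] using hp

theorem length_localizedModule_ne_top_of_mem_minimalPrimes_annihilator [IsNoetherianRing R]
    [Module.Finite R M] {p : Ideal R} [p.IsPrime]
    (hp : p ∈ (Module.annihilator R M).minimalPrimes) :
    Module.length (Localization.AtPrime p) (LocalizedModule p.primeCompl M) ≠ ⊤ :=
  have := isArtinianRing_localization_quotient_map hp
  length_ne_top_of_isArtinianRing_quotient
    (map_annihilator_le_annihilator_localizedModule p.primeCompl)

theorem length_localizedModule_eq_add_of_exact (S : Submonoid R) {f : N →ₗ[R] M} {g : M →ₗ[R] P}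
    (hf : Function.Injective f) (hg : Function.Surjective g) (hfg : Function.Exact f g) :
    Module.length (Localization S) (LocalizedModule S M) =
      Module.length (Localization S) (LocalizedModule S N) +
        Module.length (Localization S) (LocalizedModule S P) :=
  Module.length_eq_add_of_exact (LocalizedModule.map S f) (LocalizedModule.map S g)
    (LocalizedModule.map_injective S f hf) (LocalizedModule.map_surjective S g hg)
    (LocalizedModule.map_exact S f g hfg)

theorem length_localizedModule_ne_zero_iff_mem_support {p : PrimeSpectrum R} :
    Module.length (Localization.AtPrime p.asIdeal) (LocalizedModule p.asIdeal.primeCompl M) ≠ 0 ↔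
      p ∈ Module.support R M := by
  rw [Ne, Module.length_eq_zero_iff, not_subsingleton_iff_nontrivial, Module.mem_support_iff]

theorem mem_support_of_mem_associatedPrimes {p : PrimeSpectrum R}
    (hp : p.asIdeal ∈ associatedPrimes R M) : p ∈ Module.support R M := by
  rw [Module.mem_support_iff, ← not_subsingleton_iff_nontrivial]
  intro
  exact not_isAssociatedPrime_of_subsingleton
    (Module.associatedPrimes.mem_associatedPrimes_atPrime_of_mem_associatedPrimes hp)

theorem mem_minimalPrimes_annihilator_of_height_le {p : PrimeSpectrum R}
    [p.asIdeal.FiniteHeight] (hp : p ∈ Module.support R M)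
    (hht : p.asIdeal.height ≤ (Module.annihilator R M).height) :
    p.asIdeal ∈ (Module.annihilator R M).minimalPrimes :=
  Ideal.mem_minimalPrimes_of_height_le (Module.annihilator_le_of_mem_support hp) hht

theorem le_height_annihilator_of_forall_mem_associatedPrimes [IsNoetherianRing R]
    [Module.Finite R M] {h : ℕ∞} (hass : ∀ p ∈ associatedPrimes R M, h ≤ p.height) :
    h ≤ (Module.annihilator R M).height := by
  rw [Ideal.height_eq_inf_minimalPrimes]
  exact le_iInf₂ fun p hp => hass p
    (Module.associatedPrimes.minimalPrimes_annihilator_subset_associatedPrimes R M hp)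

end LocalLength

theorem not_injective_factor_of_lt {R M : Type*} [Ring R] [AddCommGroup M] [Module R M]
    {N N' : Submodule R M} (h : N < N') : ¬ Function.Injective (Submodule.factor h.le) := by
  obtain ⟨x, hxN', hxN⟩ := SetLike.exists_of_lt h
  intro hinj
  refine hxN ((Submodule.Quotient.mk_eq_zero N).mp (hinj ?_))
  rw [map_zero]
  exact (Submodule.Quotient.mk_eq_zero N').mpr hxN'

section LengthAtHeight

variable {R : Type*} [CommRing R] {M N P : Type*} [AddCommGroup M] [Module R M]
  [AddCommGroup N] [Module R N] [AddCommGroup P] [Module R P] {h : ℕ∞}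

variable (R M h) in
/-- The multiplicity of the module `M` in height `h`: the sum of the lengths of the localizations
of `M` at the primes of height `h`. It extends the multiplicity `mIdeal` of an ideal `I`, which is
the case `M = R ⧸ I` and `h = height I`, to a quantity that is additive on exact sequences. -/
def lengthAtHeight : ℕ∞ :=
  ∑' p : {p : PrimeSpectrum R | p.asIdeal.height = h},
    Module.length (Localization.AtPrime p.1.asIdeal) (LocalizedModule p.1.asIdeal.primeCompl M)

theorem lengthAtHeight_eq_add_of_exact {f : N →ₗ[R] M} {g : M →ₗ[R] P}
    (hf : Function.Injective f) (hg : Function.Surjective g) (hfg : Function.Exact f g) :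
    lengthAtHeight R M h = lengthAtHeight R N h + lengthAtHeight R P h := by
  simp only [lengthAtHeight, length_localizedModule_eq_add_of_exact _ hf hg hfg]
  exact (summable_of_canonicallyOrderedAdd _).tsum_add (summable_of_canonicallyOrderedAdd _)

theorem lengthAtHeight_ne_zero_of_mem_support {p : PrimeSpectrum R}
    (hp : p ∈ Module.support R M) (hht : p.asIdeal.height = h) : lengthAtHeight R M h ≠ 0 :=
  (summable_of_canonicallyOrderedAdd _).tsum_ne_zero_iff.mpr
    ⟨⟨p, hht⟩, length_localizedModule_ne_zero_iff_mem_support.mpr hp⟩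

theorem lengthAtHeight_ne_top [IsNoetherianRing R] [Module.Finite R M]
    (hM : h ≤ (Module.annihilator R M).height) : lengthAtHeight R M h ≠ ⊤ := by
  have minimal_of_length_ne_zero (p : {p : PrimeSpectrum R | p.asIdeal.height = h})
      (hp : Module.length (Localization.AtPrime p.1.asIdeal)
        (LocalizedModule p.1.asIdeal.primeCompl M) ≠ 0) :
      p.1.asIdeal ∈ (Module.annihilator R M).minimalPrimes :=
    mem_minimalPrimes_annihilator_of_height_le
      (length_localizedModule_ne_zero_iff_mem_support.mp hp) (p.2.trans_le hM)
  refine tsum_enat_ne_top_of_finite_support ?_ fun p htop => ?_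
  · refine ((Module.annihilator R M).finite_minimalPrimes_of_isNoetherianRing.preimage ?_).subset
      minimal_of_length_ne_zero
    exact fun p _ q _ hpq => Subtype.ext (PrimeSpectrum.ext hpq)
  · have hmin := minimal_of_length_ne_zero p (htop ▸ ENat.top_ne_zero)
    exact length_localizedModule_ne_top_of_mem_minimalPrimes_annihilator hmin htop

theorem lengthAtHeight_lt_of_surjective [IsNoetherianRing R] [Module.Finite R M]
    (hass : ∀ p ∈ associatedPrimes R M, p.height = h) {g : M →ₗ[R] P}
    (hsurj : Function.Surjective g) (hinj : ¬ Function.Injective g) :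
    lengthAtHeight R P h < lengthAtHeight R M h := by
  have hadd : lengthAtHeight R M h = lengthAtHeight R g.ker h + lengthAtHeight R P h :=
    lengthAtHeight_eq_add_of_exact g.ker.subtype_injective hsurj g.exact_subtype_ker_map
  have hker : lengthAtHeight R g.ker h ≠ 0 := by
    have : Nontrivial g.ker :=
      Submodule.nontrivial_iff_ne_bot.mpr (LinearMap.ker_eq_bot.not.mpr hinj)
    obtain ⟨p, hp⟩ := associatedPrimes.nonempty R g.ker
    exact lengthAtHeight_ne_zero_of_mem_support (p := ⟨p, hp.isPrime⟩)
      (mem_support_of_mem_associatedPrimes hp)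
      (hass p (associatedPrimes.subset_of_injective g.ker.subtype_injective hp))
  have hfin := lengthAtHeight_ne_top
    (le_height_annihilator_of_forall_mem_associatedPrimes fun p hp => (hass p hp).ge)
  rw [hadd] at hfin ⊢
  exact ENat.lt_add_left (WithTop.add_ne_top.mp hfin).2 (pos_iff_ne_zero.mpr hker)

end LengthAtHeight

section Ideal

variable {R : Type*} [CommRing R]

theorem idealHeight_eq_height (I : Ideal R) : idealHeight I = I.height := by
  apply le_antisymm
  · rw [Ideal.height_eq_inf_minimalPrimes]
    refine le_iInf₂ fun p hp => ?_
    have := hp.isPrime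
    exact (iInf₂_le (⟨p, this⟩ : PrimeSpectrum R) hp.1.2).trans_eq
      (PrimeSpectrum.height_eq_orderHeight ⟨p, this⟩).symm
  · refine le_iInf₂ fun p hp => ?_
    rw [← PrimeSpectrum.height_eq_orderHeight]
    exact Ideal.height_mono hp

theorem mIdeal_eq_lengthAtHeight (I : Ideal R) :
    mIdeal I = lengthAtHeight R (R ⧸ I) I.height := by
  simp only [mIdeal, moduleLength, idealHeight_eq_height, ← Module.length_eq_height,
    lengthAtHeight]
  rw [tsum_subtype {p : PrimeSpectrum R | p.asIdeal.height = I.height} fun p =>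
    Module.length (Localization.AtPrime p.asIdeal) (LocalizedModule p.asIdeal.primeCompl (R ⧸ I))]
  simp only [Set.indicator_apply, Set.mem_ofPred_eq]

end Ideal

theorem multiplicity_strict_decrease_general {R : Type*} [CommRing R] [IsNoetherianRing R]
    {I J : Ideal R} (hIJ : I < J) (hht : idealHeight I = idealHeight J)
    (heqI : IsEquidimensional I) :
    mIdeal J < mIdeal I ∧ mIdeal I ≠ ⊤ := by
  simp only [IsEquidimensional, idealHeight_eq_height] at hht heqI
  rw [mIdeal_eq_lengthAtHeight, mIdeal_eq_lengthAtHeight, ← hht]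
  have hlt := lengthAtHeight_lt_of_surjective heqI (Submodule.factor_surjective hIJ.le)
    (not_injective_factor_of_lt hIJ)
  have hann : I.height ≤ (Module.annihilator R (R ⧸ I)).height := by
    rw [Ideal.annihilator_quotient]
  exact ⟨hlt, lengthAtHeight_ne_top hann⟩

/-- Strict decrease of the multiplicity `m(·)` along strict inclusions of equidimensional
ideals of the same height (from the proof of Lemma `LemmeProp13` of the paper). -/
theorem multiplicity_strict_decrease
    {k : Type*} [Field k] (n : ℕ)
    (I J : Ideal (MvPolynomial (Fin 2 ⊕ Fin (n + 1)) k))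
    (hIJ : I < J) (hJ : J ≠ ⊤)
    (hht : idealHeight I = idealHeight J)
    (heqI : IsEquidimensional I) (heqJ : IsEquidimensional J) :
    mIdeal J < mIdeal I ∧ mIdeal I ≠ ⊤ :=
  multiplicity_strict_decrease_general hIJ hht heqI
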